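/- Let α : [m] → [n] be a monotone map, Γ : [m+r] → [m] × [r] a maximal chain, and let (Γ', β) be a pair consisting of a maximal chain Γ' : [n+r] → [n] × [r] and a monotone map β : [m+r] → [n+r] with Γ'(β(k)) = (α((Γ k).fst), (Γ k).snd) for all k ∈ [m+r]. Then β is given by the formula (β(k) : ℕ) = (α((Γ k).fst) : ℕ) + ((Γ k).snd : ℕ) for every k ∈ [m+r]; in particular β(fs_Γ(j)) = α((Γ(fs_Γ(j))).fst) + j for every 1 ≤ j ≤ r. -/

import Mathlib

open Finset

/-- `fs_Γ(i) = min { j | (Γ j).snd ≥ i }` (defined as `0` if the set is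
empty; for maximal chains the set is always nonempty). -/
def fs {p n r : ℕ} (Γ : Fin (p + 1) → Fin (n + 1) × Fin (r + 1))
    (i : Fin (r + 1)) : Fin (p + 1) :=
  if h : (univ.filter fun j => i ≤ (Γ j).2).Nonempty
  then (univ.filter fun j => i ≤ (Γ j).2).min' h else 0

lemma chain_sum {n r : ℕ} (Γ : Fin (n + r + 1) → Fin (n + 1) × Fin (r + 1))
    (hm : Monotone Γ) (hi : Function.Injective Γ) (k : Fin (n + r + 1)) :
    ((Γ k).1 : ℕ) + ((Γ k).2 : ℕ) = k := by
  have hs : StrictMono Γ := hm.strictMono_of_injective hi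
  have step : ∀ d : ℕ, ∀ i j : Fin (n + r + 1), (j : ℕ) = i + d →
      ((Γ i).1 : ℕ) + ((Γ i).2 : ℕ) + d ≤ ((Γ j).1 : ℕ) + ((Γ j).2 : ℕ) := by
    intro d
    induction d with
    | zero =>
      intro i j h
      have : j = i := Fin.ext (by simpa using h)
      subst this; simp
    | succ d ih =>
      intro i j h
      have hj := j.isLt
      have h1 := ih i ⟨i + d, by omega⟩ rfl
      have hlt : (⟨i + d, by omega⟩ : Fin (n + r + 1)) < j := by
        rw [Fin.lt_def]; simp only; omega
      have h2 := hs hlt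
      rw [Prod.lt_iff] at h2
      simp only [Fin.lt_def, Fin.le_def] at h2
      omega
  have hk := k.isLt
  have h0 := step k 0 k (by simp)
  have h1 := step (n + r - k) k (Fin.last _) (by simp; omega)
  have := (Γ (Fin.last _)).1.isLt
  have := (Γ (Fin.last _)).2.isLt
  omega

lemma fs_snd {m r : ℕ} (Γ : Fin (m + r + 1) → Fin (m + 1) × Fin (r + 1))
    (hm : Monotone Γ) (hi : Function.Injective Γ) (j : Fin (r + 1)) :
    (Γ (fs Γ j)).2 = j := by
  have hne : (univ.filter fun k => j ≤ (Γ k).2).Nonempty := by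
    refine ⟨Fin.last _, ?_⟩
    have h := chain_sum Γ hm hi (Fin.last _)
    have := (Γ (Fin.last _)).1.isLt
    simp only [mem_filter, mem_univ, true_and, Fin.le_def]
    simp only [Fin.val_last] at h
    omega
  have hmem : j ≤ (Γ (fs Γ j)).2 := by
    have := Finset.min'_mem _ hne
    rw [fs, dif_pos hne]
    exact (mem_filter.1 this).2
  have hmin : ∀ k, j ≤ (Γ k).2 → fs Γ j ≤ k := by
    intro k hk
    rw [fs, dif_pos hne]
    exact Finset.min'_le _ _ (by simpa using hk)
  generalize fs Γ j = k at *
  have hk := chain_sum Γ hm hi k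
  have hkl := k.isLt
  rw [Fin.le_def] at hmem
  apply Fin.ext
  by_contra hcon
  have hp := chain_sum Γ hm hi ⟨k - 1, by omega⟩
  have hle := hm (show (⟨k - 1, by omega⟩ : Fin (m + r + 1)) ≤ k by
    rw [Fin.le_def]; simp)
  have h1 := hle.1
  have h3 := hmin ⟨k - 1, by omega⟩
  simp only [Fin.le_def] at h1 h3 hp
  omega

/-- Let `α : [m] → [n]` be monotone, `Γ : [m+r] → [m] × [r]` a
maximal chain, and `(Γ', β)` a pair with `Γ' : [n+r] → [n] × [r]` a maximal
chain and `β : [m+r] → [n+r]` monotone such that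
`Γ'(β(k)) = (α((Γ k).fst), (Γ k).snd)` for all `k`.  Then
`β(k) = α((Γ k).fst) + (Γ k).snd` (in `ℕ`) for every `k`; in particular
`β(fs_Γ(j)) = α((Γ(fs_Γ(j))).fst) + j` for every `1 ≤ j ≤ r`. -/
theorem beta_formula (n m r : ℕ)
    (α : Fin (m + 1) → Fin (n + 1)) (hαmono : Monotone α)
    (Γ : Fin (m + r + 1) → Fin (m + 1) × Fin (r + 1))
    (hΓmono : Monotone Γ) (hΓinj : Function.Injective Γ)
    (Γ' : Fin (n + r + 1) → Fin (n + 1) × Fin (r + 1))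
    (hΓ'mono : Monotone Γ') (hΓ'inj : Function.Injective Γ')
    (β : Fin (m + r + 1) → Fin (n + r + 1)) (hβmono : Monotone β)
    (hcomm : ∀ k, Γ' (β k) = (α (Γ k).1, (Γ k).2)) :
    (∀ k, (β k : ℕ) = (α (Γ k).1 : ℕ) + ((Γ k).2 : ℕ)) ∧
    ∀ j : Fin (r + 1), 1 ≤ (j : ℕ) →
      (β (fs Γ j) : ℕ) = (α (Γ (fs Γ j)).1 : ℕ) + (j : ℕ) := by
  have key : ∀ k, (β k : ℕ) = (α (Γ k).1 : ℕ) + ((Γ k).2 : ℕ) := by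
    intro k
    have h := chain_sum Γ' hΓ'mono hΓ'inj (β k)
    rw [hcomm] at h
    exact h.symm
  refine ⟨key, fun j _ => ?_⟩
  rw [key, fs_snd Γ hΓmono hΓinj j]
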